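/- arXiv:2209.15130 — 2 statements merged into one kernel-verified Lean document; each statement's English description precedes it below -/
import Mathlib

section
/- Suppose f satisfies the (2r,4r)-restricted strong convexity and smoothness properties with parameter δ ∈ [0,1). Fix Y* ∈ ℝ^{p×r}_*, set X* := Y*Y*ᵀ, κ* := σ_1(Y*)/σ_r(Y*) and N := sup{⟨B, ∇f(X*)⟩ : rank(B) ≤ r, ‖B‖_F ≤ 1}, and let μ, α ≥ 0 and β, γ > 0. If Y ∈ ℝ^{p×r}_* satisfies ‖2(YYᵀ − X*)Y‖_F > α·μ·σ_r(Y*)³/(4κ*), ‖Y‖ ≤ β‖Y*‖ and ‖YYᵀ‖_F ≤ γ‖X*‖_F, then ‖2∇f(YYᵀ)Y‖_F ≥ α·μ·σ_r(Y*)³/(4κ*) − (2δβ(1+γ)‖Y*‖·‖X*‖_F + 2β‖Y*‖·N). In particular, if moreover δ ≤ (αμ/(32κ*²β(1+γ)))·σ_r(Y*)²/‖X*‖_F and N ≤ (αμ/(32κ*²β))·σ_r(Y*)², then ‖2∇f(YYᵀ)Y‖_F > α·μ·σ_r(Y*)³/(8κ*). -/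
open Matrix

/-- Trace inner product `⟨A,B⟩ = tr(AᵀB)`. -/
noncomputable def trInner {m n : ℕ} (A B : Matrix (Fin m) (Fin n) ℝ) : ℝ :=
  ∑ i, ∑ j, A i j * B i j

/-- Frobenius norm. -/
noncomputable def frob {m n : ℕ} (A : Matrix (Fin m) (Fin n) ℝ) : ℝ :=
  Real.sqrt (∑ i, ∑ j, (A i j) ^ 2)

open scoped Classical in
/-- The `i`-th largest eigenvalue (1-indexed, `1 ≤ i ≤ n`) of a Hermitian matrix; junk value 0
otherwise. -/
noncomputable def eigVal {n : ℕ} (A : Matrix (Fin n) (Fin n) ℝ) (i : ℕ) : ℝ :=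
  if hA : A.IsHermitian then
    if h : n - i < n then hA.eigenvalues (Tuple.sort hA.eigenvalues ⟨n - i, h⟩) else 0
  else 0

/-- The `i`-th largest singular value (1-indexed) of `Y`, so `sval Y 1 = ‖Y‖` (spectral norm)
and `sval Y r` is the least singular value. -/
noncomputable def sval {p r : ℕ} (Y : Matrix (Fin p) (Fin r) ℝ) (i : ℕ) : ℝ :=
  Real.sqrt (eigVal (Yᵀ * Y) i)

/-- `Q` is an orthogonal matrix. -/
def IsOrtho {r : ℕ} (Q : Matrix (Fin r) (Fin r) ℝ) : Prop := Qᵀ * Q = 1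

/-- The quotient distance `d(Y₁,Y₂) = min_{Q ∈ O(r)} ‖Y₂Q − Y₁‖_F`. -/
noncomputable def dOrth {p r : ℕ} (Y₁ Y₂ : Matrix (Fin p) (Fin r) ℝ) : ℝ :=
  sInf {c | ∃ Q : Matrix (Fin r) (Fin r) ℝ, IsOrtho Q ∧ c = frob (Y₂ * Q - Y₁)}

/-!
Restricted strong convexity and smoothness say that `f - ‖·‖² / 2` has Hessian bounded by `δ` along
matrices of low rank. All products `A * R` with the fixed factor `R = [Yᵀ; Zᵀ]` have rank at most
`2 * r` and form a linear space, so on it the gradient of `f - ‖·‖² / 2` is `δ`-Lipschitz. For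
`M = ∇f(YYᵀ) - (YYᵀ - ZZᵀ)` this gives
`⟨M, WYᵀ⟩ ≤ (δ ‖YYᵀ - ZZᵀ‖ + N) ‖WYᵀ‖` for every `W`, where `N` measures `∇f(ZZᵀ)` against matrices
of rank at most `r`. Taking `W = M * Y` bounds `‖M * Y‖` by the same constant times `‖Y‖`, and the
triangle inequality transfers a large gradient `(YYᵀ - ZZᵀ) * Y` to `∇f(YYᵀ) * Y`.
-/

section LineDeriv

variable {E F : Type*} [AddCommGroup E] [Module ℝ E] [NormedAddCommGroup F] [NormedSpace ℝ F]

lemma hasDerivAt_add_smul {f : E → F} {x v : E} {t : ℝ} {f' : F}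
    (hf : HasLineDerivAt ℝ f f' (x + t • v) v) : HasDerivAt (fun s : ℝ => f (x + s • v)) f' t := by
  have hshift : (fun s : ℝ => f (x + t • v + (s - t) • v)) = fun s => f (x + s • v) := by
    funext s
    congr 1
    module
  rw [← hshift]
  refine HasDerivAt.comp_sub_const (f := fun s : ℝ => f (x + t • v + s • v)) t t ?_
  rwa [sub_self]

lemma norm_sub_sub_sub_le_of_deriv2_bound {h g k : ℝ → F} {q : F} {c : ℝ}
    (hh : ∀ t, HasDerivAt h (g t) t) (hg : ∀ t, HasDerivAt g (k t) t) (hk : ∀ t, ‖k t - q‖ ≤ c) :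
    ‖h 1 - h 0 - g 0 - (1 / 2 : ℝ) • q‖ ≤ c / 2 := by
  have hg_bound : ∀ t ∈ Set.Icc (0 : ℝ) 1, ‖g t - g 0 - t • q‖ ≤ c * t := by
    intro t ht
    have hderiv : ∀ s, HasDerivAt (fun s => g s - s • q) (k s - q) s := fun s => by
      simpa using (hg s).fun_sub ((hasDerivAt_id s).smul_const q)
    simpa [sub_right_comm] using norm_image_sub_le_of_norm_deriv_le_segment'
      (fun s _ => (hderiv s).hasDerivWithinAt) (fun s _ => hk s) t ht
  have hderiv : ∀ t, HasDerivAt (fun t => h t - h 0 - t • g 0 - (t ^ 2 / 2) • q)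
      (g t - g 0 - t • q) t := fun t => by
    simpa using (((hh t).sub_const (h 0)).fun_sub ((hasDerivAt_id t).smul_const (g 0))).fun_sub
      ((((hasDerivAt_id t).pow 2).div_const 2).smul_const q)
  have hquad : ∀ t, HasDerivAt (fun t => c * (t ^ 2 / 2)) (c * t) t := fun t => by
    simpa using (((hasDerivAt_id t).pow 2).div_const 2).const_mul c
  have := image_norm_le_of_norm_deriv_right_le_deriv_boundary
    (fun t _ => (hderiv t).continuousAt.continuousWithinAt)
    (fun t _ => (hderiv t).hasDerivWithinAt) (by simp) hquad
    (fun t ht => hg_bound t (Set.Ico_subset_Icc_self ht)) (Set.right_mem_Icc.2 zero_le_one)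
  simpa [div_eq_mul_inv] using this

end LineDeriv

section InnerProductSpace

open scoped RealInnerProductSpace

variable {E : Type*} [NormedAddCommGroup E] [InnerProductSpace ℝ E]
  {S : Submodule ℝ E} {f : E → ℝ} {g : E → E} {h : E → E → ℝ} {m c : ℝ}

-- Compare the expansions at `x` and at `y` at the two points `(x + y) / 2 ± z`: all values of `f`
-- cancel, and the parallelogram law evaluates the error terms.
lemma inner_sub_le_of_abs_sub_sub_inner_le
    (hf : ∀ x ∈ S, ∀ y ∈ S, |f y - f x - ⟪g x, y - x⟫| ≤ c / 2 * ‖y - x‖ ^ 2)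
    {x y z : E} (hx : x ∈ S) (hy : y ∈ S) (hz : z ∈ S) :
    ⟪g y - g x, z⟫ ≤ c * (‖y - x‖ ^ 2 / 4 + ‖z‖ ^ 2) := by
  set d := y - x with hd
  have expand : ∀ w ∈ S,
      |f (x + (1 / 2 : ℝ) • d + w) - f x - (⟪g x, d⟫ / 2 + ⟪g x, w⟫)|
          ≤ c / 2 * (‖d‖ ^ 2 / 4 + ⟪d, w⟫ + ‖w‖ ^ 2) ∧
      |f (x + (1 / 2 : ℝ) • d + w) - f y - (-⟪g y, d⟫ / 2 + ⟪g y, w⟫)|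
          ≤ c / 2 * (‖d‖ ^ 2 / 4 - ⟪d, w⟫ + ‖w‖ ^ 2) := by
    intro w hw
    have hmid : x + (1 / 2 : ℝ) • d + w ∈ S :=
      S.add_mem (S.add_mem hx (S.smul_mem _ (S.sub_mem hy hx))) hw
    have hx' := hf x hx _ hmid
    have hy' := hf y hy _ hmid
    rw [show x + (1 / 2 : ℝ) • d + w - x = (1 / 2 : ℝ) • d + w by module, norm_add_sq_real] at hx'
    rw [show x + (1 / 2 : ℝ) • d + w - y = w - (1 / 2 : ℝ) • d by rw [hd]; module,
      norm_sub_sq_real] at hy'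
    simp only [norm_smul, mul_pow, Real.norm_eq_abs, sq_abs, inner_add_right, inner_sub_right,
      real_inner_smul_right, real_inner_smul_left, real_inner_comm d w] at hx' hy'
    constructor
    · convert hx' using 2 <;> ring
    · convert hy' using 2 <;> ring_nf
  have hplus := expand z hz
  have hminus := expand (-z) (S.neg_mem hz)
  rw [inner_sub_left]
  simp only [abs_le, inner_neg_right, norm_neg] at hplus hminus
  linarith

lemma abs_inner_sub_le_of_abs_sub_sub_inner_le (hc : 0 ≤ c)
    (hf : ∀ x ∈ S, ∀ y ∈ S, |f y - f x - ⟪g x, y - x⟫| ≤ c / 2 * ‖y - x‖ ^ 2)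
    {x y z : E} (hx : x ∈ S) (hy : y ∈ S) (hz : z ∈ S) :
    |⟪g y - g x, z⟫| ≤ c * ‖y - x‖ * ‖z‖ := by
  have hscaled : ∀ s : ℝ, s * ⟪g y - g x, z⟫ ≤ c * (‖y - x‖ ^ 2 / 4 + s ^ 2 * ‖z‖ ^ 2) := by
    intro s
    simpa only [real_inner_smul_right, norm_smul, mul_pow, Real.norm_eq_abs, sq_abs]
      using inner_sub_le_of_abs_sub_sub_inner_le hf hx hy (S.smul_mem s hz)
  have hdiscrim := discrim_le_zero (a := c * ‖z‖ ^ 2) (b := -⟪g y - g x, z⟫)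
    (c := c * ‖y - x‖ ^ 2 / 4) fun s => by linarith [hscaled s]
  refine abs_le_of_sq_le_sq ?_ (by positivity)
  rw [discrim] at hdiscrim
  linarith

lemma abs_sub_sub_inner_sub_le
    (hf : ∀ x ∈ S, ∀ v ∈ S, HasLineDerivAt ℝ f ⟪g x, v⟫ x v)
    (hg : ∀ x ∈ S, ∀ v ∈ S, HasLineDerivAt ℝ (fun y => ⟪g y, v⟫) (h x v) x v)
    (hh : ∀ x ∈ S, ∀ v ∈ S, |h x v - m * ‖v‖ ^ 2| ≤ c * ‖v‖ ^ 2)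
    {x y : E} (hx : x ∈ S) (hy : y ∈ S) :
    |f y - f x - ⟪g x, y - x⟫ - m / 2 * ‖y - x‖ ^ 2| ≤ c / 2 * ‖y - x‖ ^ 2 := by
  have hv : y - x ∈ S := S.sub_mem hy hx
  have hline : ∀ t : ℝ, x + t • (y - x) ∈ S := fun t => S.add_mem hx (S.smul_mem t hv)
  have := norm_sub_sub_sub_le_of_deriv2_bound
    (fun t => hasDerivAt_add_smul (hf _ (hline t) _ hv))
    (fun t => hasDerivAt_add_smul (hg _ (hline t) _ hv))
    (fun t => (hh _ (hline t) _ hv))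
  simp only [one_smul, zero_smul, add_zero, add_sub_cancel, Real.norm_eq_abs, smul_eq_mul] at this
  convert this using 2 <;> ring

lemma abs_inner_sub_sub_smul_le (hc : 0 ≤ c)
    (hf : ∀ x ∈ S, ∀ v ∈ S, HasLineDerivAt ℝ f ⟪g x, v⟫ x v)
    (hg : ∀ x ∈ S, ∀ v ∈ S, HasLineDerivAt ℝ (fun y => ⟪g y, v⟫) (h x v) x v)
    (hh : ∀ x ∈ S, ∀ v ∈ S, |h x v - m * ‖v‖ ^ 2| ≤ c * ‖v‖ ^ 2)
    {x y z : E} (hx : x ∈ S) (hy : y ∈ S) (hz : z ∈ S) :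
    |⟪g y - g x - m • (y - x), z⟫| ≤ c * ‖y - x‖ * ‖z‖ := by
  have hcentered : ∀ a ∈ S, ∀ b ∈ S,
      |(f b - m / 2 * ‖b‖ ^ 2) - (f a - m / 2 * ‖a‖ ^ 2) - ⟪g a - m • a, b - a⟫|
        ≤ c / 2 * ‖b - a‖ ^ 2 := by
    intro a ha b hb
    have hnorm : ‖b‖ ^ 2 = ‖a‖ ^ 2 + 2 * ⟪a, b - a⟫ + ‖b - a‖ ^ 2 := by
      rw [← norm_add_sq_real, add_sub_cancel]
    convert abs_sub_sub_inner_sub_le hf hg hh ha hb using 2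
    rw [inner_sub_left, real_inner_smul_left, hnorm]
    ring
  convert abs_inner_sub_le_of_abs_sub_sub_inner_le hc hcentered hx hy hz using 3
  module

end InnerProductSpace

section Frobenius

variable {m n k : ℕ}

attribute [local instance] Matrix.frobeniusNormedAddCommGroup Matrix.frobeniusNormedSpace

lemma frob_eq_norm (A : Matrix (Fin m) (Fin n) ℝ) : frob A = ‖A‖ := by
  simp [frob, Matrix.frobenius_norm_def, Real.sqrt_eq_rpow]

lemma trInner_self (A : Matrix (Fin m) (Fin n) ℝ) : trInner A A = frob A ^ 2 := by
  rw [frob, Real.sq_sqrt (by positivity)]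
  simp only [trInner, sq]

/-- The trace inner product as an inner product space structure whose norm is Mathlib's Frobenius
norm; it makes the Hilbert space lemmas available for matrices. -/
noncomputable local instance trInnerProductSpace :
    InnerProductSpace ℝ (Matrix (Fin m) (Fin n) ℝ) where
  inner := trInner
  norm_sq_eq_re_inner A := by rw [← frob_eq_norm, ← trInner_self]; rfl
  conj_inner_symm A B := by simp [trInner, mul_comm]
  add_left A B C := by simp [trInner, add_mul, Finset.sum_add_distrib]
  smul_left A B c := by simp [trInner, Finset.mul_sum, mul_assoc]

lemma frob_nonneg (A : Matrix (Fin m) (Fin n) ℝ) : 0 ≤ frob A := Real.sqrt_nonneg _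

lemma frob_pos {A : Matrix (Fin m) (Fin n) ℝ} : 0 < frob A ↔ A ≠ 0 := by
  rw [frob_eq_norm, norm_pos_iff]

lemma frob_sub_le (A B : Matrix (Fin m) (Fin n) ℝ) : frob (A - B) ≤ frob A + frob B := by
  simpa only [frob_eq_norm] using norm_sub_le A B

lemma frob_sub_frob_le (A B : Matrix (Fin m) (Fin n) ℝ) : frob A - frob B ≤ frob (B - A) := by
  simpa only [frob_eq_norm, norm_sub_rev B A] using norm_sub_norm_le A B

lemma frob_smul (c : ℝ) (A : Matrix (Fin m) (Fin n) ℝ) : frob (c • A) = |c| * frob A := by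
  simp only [frob_eq_norm, norm_smul, Real.norm_eq_abs]

lemma trInner_smul_left (c : ℝ) (A B : Matrix (Fin m) (Fin n) ℝ) :
    trInner (c • A) B = c * trInner A B :=
  real_inner_smul_left A B c

lemma trInner_sub_left (A B C : Matrix (Fin m) (Fin n) ℝ) :
    trInner (A - B) C = trInner A C - trInner B C :=
  inner_sub_left A B C

lemma trInner_comm (A B : Matrix (Fin m) (Fin n) ℝ) : trInner A B = trInner B A :=
  real_inner_comm B A

lemma trInner_le_frob_mul_frob (A B : Matrix (Fin m) (Fin n) ℝ) :
    trInner A B ≤ frob A * frob B := by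
  rw [frob_eq_norm, frob_eq_norm]
  exact real_inner_le_norm A B

lemma trInner_eq_trace (A B : Matrix (Fin m) (Fin n) ℝ) : trInner A B = (A * Bᵀ).trace := by
  simp only [trInner, Matrix.trace, Matrix.diag, Matrix.mul_apply, Matrix.transpose_apply]

lemma trInner_mul_left (A : Matrix (Fin m) (Fin n) ℝ) (B : Matrix (Fin n) (Fin k) ℝ)
    (C : Matrix (Fin m) (Fin k) ℝ) : trInner (A * B) C = trInner A (C * Bᵀ) := by
  simp only [trInner_eq_trace, Matrix.transpose_mul, Matrix.transpose_transpose, Matrix.mul_assoc]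

/-- The `(k, l)`-restricted strong convexity and smoothness property with parameter `δ`, stated for
the quadratic forms `hessf X G = ∇²f(X)[G, G]` of a Hessian. -/
def IsRestrictedStrongConvexSmooth
    (hessf : Matrix (Fin m) (Fin n) ℝ → Matrix (Fin m) (Fin n) ℝ → ℝ) (k l : ℕ) (δ : ℝ) : Prop :=
  ∀ X G, X.rank ≤ k → G.rank ≤ l →
    (1 - δ) * frob G ^ 2 ≤ hessf X G ∧ hessf X G ≤ (1 + δ) * frob G ^ 2

lemma abs_trInner_sub_sub_le {ι : Type*} [Fintype ι]
    {f : Matrix (Fin m) (Fin n) ℝ → ℝ}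
    {gradf : Matrix (Fin m) (Fin n) ℝ → Matrix (Fin m) (Fin n) ℝ}
    {hessf : Matrix (Fin m) (Fin n) ℝ → Matrix (Fin m) (Fin n) ℝ → ℝ} {δ : ℝ} (hδ : 0 ≤ δ)
    (hgrad : ∀ X D, HasLineDerivAt ℝ f (trInner (gradf X) D) X D)
    (hhess : ∀ X G, HasLineDerivAt ℝ (fun X' => trInner (gradf X') G) (hessf X G) X G)
    (hrsc : IsRestrictedStrongConvexSmooth hessf (Fintype.card ι) (Fintype.card ι) δ)
    (R : Matrix ι (Fin n) ℝ) (A B C : Matrix (Fin m) ι ℝ) :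
    |trInner (gradf (B * R) - gradf (A * R) - (B * R - A * R)) (C * R)|
      ≤ δ * frob (B * R - A * R) * frob (C * R) := by
  set S := LinearMap.range (mulRightLinearMap (Fin m) ℝ R)
  have hmem : ∀ M : Matrix (Fin m) ι ℝ, M * R ∈ S := fun M => ⟨M, rfl⟩
  have hrank : ∀ M ∈ S, M.rank ≤ Fintype.card ι := by
    rintro _ ⟨M, rfl⟩
    exact (M.rank_mul_le_left R).trans M.rank_le_card_width
  have hcurv : ∀ X ∈ S, ∀ G ∈ S, |hessf X G - 1 * ‖G‖ ^ 2| ≤ δ * ‖G‖ ^ 2 := by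
    intro X hX G hG
    obtain ⟨hlower, hupper⟩ := hrsc X G (hrank X hX) (hrank G hG)
    rw [frob_eq_norm] at hlower hupper
    rw [abs_le]
    constructor <;> linarith
  have hlip := abs_inner_sub_sub_smul_le hδ (fun X _ D _ => hgrad X D)
    (fun X _ G _ => hhess X G) hcurv (hmem A) (hmem B) (hmem C)
  rw [one_smul] at hlip
  rwa [frob_eq_norm, frob_eq_norm]

end Frobenius

section SpectralNorm

open scoped MatrixOrder

variable {m n : ℕ}

lemma eigenvalues_le_eigVal_one {A : Matrix (Fin n) (Fin n) ℝ} (hA : A.IsHermitian) (i : Fin n) :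
    hA.eigenvalues i ≤ eigVal A 1 := by
  have hn : n - 1 < n := Nat.sub_lt i.pos one_pos
  rw [eigVal, dif_pos hA, dif_pos hn]
  let σ := Tuple.sort hA.eigenvalues
  have hle : σ.symm i ≤ ⟨n - 1, hn⟩ := Nat.le_sub_one_of_lt (σ.symm i).isLt
  simpa [σ] using Tuple.monotone_sort hA.eigenvalues hle

lemma eigVal_pos {A : Matrix (Fin n) (Fin n) ℝ} (hA : A.PosDef) {i : ℕ} (hi : 0 < i)
    (hn : 0 < n) : 0 < eigVal A i := by
  rw [eigVal, dif_pos hA.isHermitian, dif_pos (Nat.sub_lt hn hi)]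
  exact hA.eigenvalues_pos _

lemma le_eigVal_one_smul_one {A : Matrix (Fin n) (Fin n) ℝ} (hA : A.IsHermitian) :
    A ≤ eigVal A 1 • 1 := by
  rw [← Algebra.algebraMap_eq_smul_one]
  refine le_algebraMap_of_spectrum_le ?_ hA
  rw [hA.spectrum_real_eq_range_eigenvalues]
  rintro _ ⟨i, rfl⟩
  exact eigenvalues_le_eigVal_one hA i

lemma sval_nonneg (Y : Matrix (Fin m) (Fin n) ℝ) (i : ℕ) : 0 ≤ sval Y i := Real.sqrt_nonneg _

lemma sval_pos {Y : Matrix (Fin m) (Fin n) ℝ} (hY : Y.rank = n) {i : ℕ} (hi : 0 < i)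
    (hn : 0 < n) : 0 < sval Y i := by
  have hcols : LinearIndependent ℝ Y.col := by
    rw [linearIndependent_iff_card_eq_finrank_span, Set.finrank, ← Y.rank_eq_finrank_span_cols, hY,
      Fintype.card_fin]
  have hgram : (Yᵀ * Y).PosDef :=
    Matrix.PosDef.conjTranspose_mul_self Y (Matrix.mulVec_injective_iff.2 hcols)
  exact Real.sqrt_pos.2 (eigVal_pos hgram hi hn)

lemma frob_mul_transpose_le {k : ℕ} (W : Matrix (Fin k) (Fin n) ℝ) (Y : Matrix (Fin m) (Fin n) ℝ) :
    frob (W * Yᵀ) ≤ frob W * sval Y 1 := by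
  have hsq : frob (W * Yᵀ) ^ 2 ≤ eigVal (Yᵀ * Y) 1 * frob W ^ 2 := by
    have hle := le_eigVal_one_smul_one (Matrix.isHermitian_conjTranspose_mul_self Y)
    have htrace := ((Matrix.le_iff.1 hle).mul_mul_conjTranspose_same W).trace_nonneg
    rw [← trInner_self, ← trInner_self, trInner_eq_trace, trInner_eq_trace]
    simpa [Matrix.mul_sub, Matrix.sub_mul, Matrix.mul_assoc] using htrace
  calc frob (W * Yᵀ) ≤ √(eigVal (Yᵀ * Y) 1 * frob W ^ 2) := Real.le_sqrt_of_sq_le hsq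
    _ = frob W * sval Y 1 := by
      rw [Real.sqrt_mul' _ (sq_nonneg _), Real.sqrt_sq (frob_nonneg W), mul_comm, sval]

lemma frob_mul_le_of_trInner_le {p : ℕ} {M : Matrix (Fin m) (Fin p) ℝ}
    {Y : Matrix (Fin p) (Fin n) ℝ} {c : ℝ} (hc : 0 ≤ c)
    (hM : ∀ W : Matrix (Fin m) (Fin n) ℝ, trInner M (W * Yᵀ) ≤ c * frob (W * Yᵀ)) :
    frob (M * Y) ≤ c * sval Y 1 := by
  rcases (frob_nonneg (M * Y)).eq_or_lt with h0 | hpos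
  · rw [← h0]
    exact mul_nonneg hc (sval_nonneg Y 1)
  · refine le_of_mul_le_mul_left ?_ hpos
    calc frob (M * Y) * frob (M * Y) = trInner M (M * Y * Yᵀ) := by
          rw [← sq, ← trInner_self, trInner_mul_left]
      _ ≤ c * frob (M * Y * Yᵀ) := hM _
      _ ≤ c * (frob (M * Y) * sval Y 1) := by gcongr; exact frob_mul_transpose_le _ _
      _ = frob (M * Y) * (c * sval Y 1) := by ring

end SpectralNorm

section LowRankNorm

variable {m n : ℕ}

/-- The norm `sup {⟨B, G⟩ : rank B ≤ r, ‖B‖_F ≤ 1}`, dual to the Frobenius norm on matrices of rank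
at most `r`. It equals the Frobenius norm of the best rank-`r` approximation of `G`. -/
noncomputable def lowRankNorm (r : ℕ) (G : Matrix (Fin m) (Fin n) ℝ) : ℝ :=
  sSup {c : ℝ | ∃ B : Matrix (Fin m) (Fin n) ℝ, B.rank ≤ r ∧ frob B ≤ 1 ∧ c = trInner B G}

lemma trInner_le_lowRankNorm {r : ℕ} {B : Matrix (Fin m) (Fin n) ℝ} (hB : B.rank ≤ r)
    (hB1 : frob B ≤ 1) (G : Matrix (Fin m) (Fin n) ℝ) : trInner B G ≤ lowRankNorm r G := by
  refine le_csSup ⟨frob G, ?_⟩ ⟨B, hB, hB1, rfl⟩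
  rintro _ ⟨C, -, hC1, rfl⟩
  exact (trInner_le_frob_mul_frob C G).trans (mul_le_of_le_one_left (frob_nonneg G) hC1)

lemma lowRankNorm_nonneg (r : ℕ) (G : Matrix (Fin m) (Fin n) ℝ) : 0 ≤ lowRankNorm r G := by
  simpa [trInner] using trInner_le_lowRankNorm (B := 0) (r := r) (by simp) (by simp [frob]) G

lemma trInner_le_lowRankNorm_mul_frob {r : ℕ} {B : Matrix (Fin m) (Fin n) ℝ} (hB : B.rank ≤ r)
    (G : Matrix (Fin m) (Fin n) ℝ) : trInner B G ≤ lowRankNorm r G * frob B := by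
  obtain rfl | hB0 := eq_or_ne B 0
  · simp [trInner, frob]
  · have hpos := frob_pos.2 hB0
    have hscaled : trInner ((frob B)⁻¹ • B) G ≤ lowRankNorm r G := by
      refine trInner_le_lowRankNorm ?_ ?_ G
      · rwa [Matrix.rank_smul_of_mem_nonZeroDivisors B
          (mem_nonZeroDivisors_of_ne_zero (inv_ne_zero hpos.ne'))]
      · rw [frob_smul, abs_inv, abs_of_pos hpos, inv_mul_cancel₀ hpos.ne']
    rwa [trInner_smul_left, inv_mul_le_iff₀ hpos, mul_comm] at hscaled

end LowRankNorm

section LargeGradient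

variable {p r : ℕ} {f : Matrix (Fin p) (Fin p) ℝ → ℝ}
  {gradf : Matrix (Fin p) (Fin p) ℝ → Matrix (Fin p) (Fin p) ℝ}
  {hessf : Matrix (Fin p) (Fin p) ℝ → Matrix (Fin p) (Fin p) ℝ → ℝ} {δ : ℝ}

lemma trInner_grad_sub_sub_le (hδ : 0 ≤ δ)
    (hgrad : ∀ X D, HasLineDerivAt ℝ f (trInner (gradf X) D) X D)
    (hhess : ∀ X G, HasLineDerivAt ℝ (fun X' => trInner (gradf X') G) (hessf X G) X G)
    (hrsc : IsRestrictedStrongConvexSmooth hessf (2 * r) (2 * r) δ)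
    (Y Z W : Matrix (Fin p) (Fin r) ℝ) :
    trInner (gradf (Y * Yᵀ) - gradf (Z * Zᵀ) - (Y * Yᵀ - Z * Zᵀ)) (W * Yᵀ)
      ≤ δ * frob (Y * Yᵀ - Z * Zᵀ) * frob (W * Yᵀ) := by
  have hcard : Fintype.card (Fin r ⊕ Fin r) = 2 * r := by simp [two_mul]
  let O : Matrix (Fin p) (Fin r) ℝ := 0
  have hY : ∀ V : Matrix (Fin p) (Fin r) ℝ, fromCols V O * fromRows Yᵀ Zᵀ = V * Yᵀ := fun V => by
    rw [fromCols_mul_fromRows, Matrix.zero_mul, add_zero]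
  have hZ : ∀ V : Matrix (Fin p) (Fin r) ℝ, fromCols O V * fromRows Yᵀ Zᵀ = V * Zᵀ := fun V => by
    rw [fromCols_mul_fromRows, Matrix.zero_mul, zero_add]
  have hlip := (le_abs_self _).trans (abs_trInner_sub_sub_le hδ hgrad hhess
    (hcard ▸ hrsc) (fromRows Yᵀ Zᵀ) (fromCols O Z) (fromCols Y O) (fromCols W O))
  rwa [hY, hY, hZ] at hlip

lemma frob_sub_frob_grad_le (hδ : 0 ≤ δ)
    (hgrad : ∀ X D, HasLineDerivAt ℝ f (trInner (gradf X) D) X D)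
    (hhess : ∀ X G, HasLineDerivAt ℝ (fun X' => trInner (gradf X') G) (hessf X G) X G)
    (hrsc : IsRestrictedStrongConvexSmooth hessf (2 * r) (2 * r) δ)
    (Y Z : Matrix (Fin p) (Fin r) ℝ) :
    frob ((2 : ℝ) • ((Y * Yᵀ - Z * Zᵀ) * Y)) - frob ((2 : ℝ) • (gradf (Y * Yᵀ) * Y))
      ≤ 2 * ((δ * frob (Y * Yᵀ - Z * Zᵀ) + lowRankNorm r (gradf (Z * Zᵀ))) * sval Y 1) := by
  have hdual : ∀ W : Matrix (Fin p) (Fin r) ℝ,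
      trInner (gradf (Y * Yᵀ) - (Y * Yᵀ - Z * Zᵀ)) (W * Yᵀ) ≤
        (δ * frob (Y * Yᵀ - Z * Zᵀ) + lowRankNorm r (gradf (Z * Zᵀ))) * frob (W * Yᵀ) := by
    intro W
    have hrank : (W * Yᵀ).rank ≤ r := (W.rank_mul_le_left Yᵀ).trans W.rank_le_width
    have hlip := trInner_grad_sub_sub_le hδ hgrad hhess hrsc Y Z W
    have hopt := trInner_le_lowRankNorm_mul_frob hrank (gradf (Z * Zᵀ))
    rw [trInner_comm] at hopt
    simp only [trInner_sub_left] at hlip ⊢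
    linarith
  have hmul := frob_mul_le_of_trInner_le
    (add_nonneg (mul_nonneg hδ (frob_nonneg _)) (lowRankNorm_nonneg r _)) hdual
  rw [Matrix.sub_mul] at hmul
  have htriangle := frob_sub_frob_le ((Y * Yᵀ - Z * Zᵀ) * Y) (gradf (Y * Yᵀ) * Y)
  rw [frob_smul, frob_smul, abs_two]
  linarith

lemma frob_sub_frob_grad_le_of_le (hδ : 0 ≤ δ)
    (hgrad : ∀ X D, HasLineDerivAt ℝ f (trInner (gradf X) D) X D)
    (hhess : ∀ X G, HasLineDerivAt ℝ (fun X' => trInner (gradf X') G) (hessf X G) X G)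
    (hrsc : IsRestrictedStrongConvexSmooth hessf (2 * r) (2 * r) δ)
    {Y Z : Matrix (Fin p) (Fin r) ℝ} {β γ : ℝ} (hspec : sval Y 1 ≤ β * sval Z 1)
    (hfrob : frob (Y * Yᵀ) ≤ γ * frob (Z * Zᵀ)) :
    frob ((2 : ℝ) • ((Y * Yᵀ - Z * Zᵀ) * Y)) - frob ((2 : ℝ) • (gradf (Y * Yᵀ) * Y))
      ≤ 2 * δ * β * (1 + γ) * sval Z 1 * frob (Z * Zᵀ) +
        2 * β * sval Z 1 * lowRankNorm r (gradf (Z * Zᵀ)) := by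
  have hdist : frob (Y * Yᵀ - Z * Zᵀ) ≤ (1 + γ) * frob (Z * Zᵀ) := by
    linarith [frob_sub_le (Y * Yᵀ) (Z * Zᵀ)]
  have hN := lowRankNorm_nonneg r (gradf (Z * Zᵀ))
  calc frob ((2 : ℝ) • ((Y * Yᵀ - Z * Zᵀ) * Y)) - frob ((2 : ℝ) • (gradf (Y * Yᵀ) * Y))
      ≤ 2 * ((δ * frob (Y * Yᵀ - Z * Zᵀ) + lowRankNorm r (gradf (Z * Zᵀ))) * sval Y 1) :=
        frob_sub_frob_grad_le hδ hgrad hhess hrsc Y Z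
    _ ≤ 2 * ((δ * ((1 + γ) * frob (Z * Zᵀ)) + lowRankNorm r (gradf (Z * Zᵀ))) *
          (β * sval Z 1)) := by
        have hδdist := mul_nonneg hδ ((frob_nonneg _).trans hdist)
        have hσ := sval_nonneg Y 1
        gcongr
    _ = _ := by ring

lemma perturbation_le_of_small {δ N a β γ κ σ F : ℝ} (hβ : 0 < β) (hγ : 0 < γ) (hκ : 0 < κ)
    (hσ : 0 < σ) (hF : 0 < F) (hδ : δ ≤ a / (32 * κ ^ 2 * β * (1 + γ)) * (σ ^ 2 / F))
    (hN : N ≤ a / (32 * κ ^ 2 * β) * σ ^ 2) :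
    2 * δ * β * (1 + γ) * (κ * σ) * F + 2 * β * (κ * σ) * N ≤ a * σ ^ 3 / (8 * κ) :=
  calc 2 * δ * β * (1 + γ) * (κ * σ) * F + 2 * β * (κ * σ) * N
      = δ * (2 * β * (1 + γ) * (κ * σ) * F) + N * (2 * β * (κ * σ)) := by ring
    _ ≤ a / (32 * κ ^ 2 * β * (1 + γ)) * (σ ^ 2 / F) * (2 * β * (1 + γ) * (κ * σ) * F) +
        a / (32 * κ ^ 2 * β) * σ ^ 2 * (2 * β * (κ * σ)) := by gcongr
    _ = a * σ ^ 3 / (8 * κ) := by field_simp; ring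

end LargeGradient

theorem stmt15_general {p r : ℕ} {f : Matrix (Fin p) (Fin p) ℝ → ℝ}
    {gradf : Matrix (Fin p) (Fin p) ℝ → Matrix (Fin p) (Fin p) ℝ}
    {hessf : Matrix (Fin p) (Fin p) ℝ → Matrix (Fin p) (Fin p) ℝ → ℝ}
    (hgrad : ∀ X D, HasLineDerivAt ℝ f (trInner (gradf X) D) X D)
    (hhess : ∀ X G, HasLineDerivAt ℝ (fun X' => trInner (gradf X') G) (hessf X G) X G)
    {δ : ℝ} (hδ : 0 ≤ δ) (hrsc : IsRestrictedStrongConvexSmooth hessf (2 * r) (2 * r) δ)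
    {Y Z : Matrix (Fin p) (Fin r) ℝ} (hZ : Z.rank = r)
    {κ : ℝ} (hκ : κ = sval Z 1 / sval Z r) {α μ β γ : ℝ} (hβ : 0 < β) (hγ : 0 < γ)
    (hgradH : α * μ * sval Z r ^ 3 / (4 * κ) < frob ((2 : ℝ) • ((Y * Yᵀ - Z * Zᵀ) * Y)))
    (hspec : sval Y 1 ≤ β * sval Z 1) (hfrob : frob (Y * Yᵀ) ≤ γ * frob (Z * Zᵀ)) :
    α * μ * sval Z r ^ 3 / (4 * κ) -
        (2 * δ * β * (1 + γ) * sval Z 1 * frob (Z * Zᵀ) +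
          2 * β * sval Z 1 * lowRankNorm r (gradf (Z * Zᵀ))) <
      frob ((2 : ℝ) • (gradf (Y * Yᵀ) * Y)) ∧
    (δ ≤ α * μ / (32 * κ ^ 2 * β * (1 + γ)) * (sval Z r ^ 2 / frob (Z * Zᵀ)) →
      lowRankNorm r (gradf (Z * Zᵀ)) ≤ α * μ / (32 * κ ^ 2 * β) * sval Z r ^ 2 →
      α * μ * sval Z r ^ 3 / (8 * κ) < frob ((2 : ℝ) • (gradf (Y * Yᵀ) * Y))) := by
  have hgap := frob_sub_frob_grad_le_of_le hδ hgrad hhess hrsc hspec hfrob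
  refine ⟨by linarith, fun hδ_small hN_small => ?_⟩
  obtain ⟨hσ₁, hσr, hF⟩ : 0 < sval Z 1 ∧ 0 < sval Z r ∧ 0 < frob (Z * Zᵀ) := by
    obtain rfl | hr := r.eq_zero_or_pos
    · simp [frob, sval, eigVal] at hgradH
    · refine ⟨sval_pos hZ one_pos hr, sval_pos hZ hr hr, frob_pos.2 fun hzero => ?_⟩
      rw [← Z.rank_self_mul_transpose, hzero, Matrix.rank_zero] at hZ
      exact hr.ne hZ
  have hκ_pos : 0 < κ := hκ ▸ div_pos hσ₁ hσr
  have hσ : sval Z 1 = κ * sval Z r := by rw [hκ, div_mul_cancel₀ _ hσr.ne']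
  have hsmall := perturbation_le_of_small hβ hγ hκ_pos hσr hF hδ_small hN_small
  rw [← hσ] at hsmall
  have hhalf : α * μ * sval Z r ^ 3 / (4 * κ) = 2 * (α * μ * sval Z r ^ 3 / (8 * κ)) := by ring
  linarith

/-- large gradient of `h` in the first large-gradient region: lower bound on
the lifted Riemannian gradient of `h([Y]) = f(YYᵀ)`, and a strict lower bound under the stated
conditions on `δ` and `N`. -/
theorem stmt15 {p r : ℕ}
    (f : Matrix (Fin p) (Fin p) ℝ → ℝ)
    (gradf : Matrix (Fin p) (Fin p) ℝ → Matrix (Fin p) (Fin p) ℝ)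
    (hessf : Matrix (Fin p) (Fin p) ℝ → Matrix (Fin p) (Fin p) ℝ → ℝ)
    (hgradf : ∀ X D : Matrix (Fin p) (Fin p) ℝ,
      HasDerivAt (fun t : ℝ => f (X + t • D)) (trInner (gradf X) D) 0)
    (hhessf : ∀ X G : Matrix (Fin p) (Fin p) ℝ,
      HasDerivAt (fun t : ℝ => trInner (gradf (X + t • G)) G) (hessf X G) 0)
    (δ : ℝ) (hδ0 : 0 ≤ δ) (hδ1 : δ < 1)
    (hRSCS : ∀ X G : Matrix (Fin p) (Fin p) ℝ, X.rank ≤ 2 * r → G.rank ≤ 4 * r →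
      (1 - δ) * (frob G) ^ 2 ≤ hessf X G ∧ hessf X G ≤ (1 + δ) * (frob G) ^ 2)
    (Ystar : Matrix (Fin p) (Fin r) ℝ) (hYs : Ystar.rank = r)
    (X : Matrix (Fin p) (Fin p) ℝ) (hX : X = Ystar * Ystarᵀ)
    (N : ℝ) (hN : N = sSup {c : ℝ | ∃ B : Matrix (Fin p) (Fin p) ℝ,
      B.rank ≤ r ∧ frob B ≤ 1 ∧ c = trInner B (gradf X)})
    (κ : ℝ) (hκ : κ = sval Ystar 1 / sval Ystar r)
    (μ α β γ : ℝ) (hμ0 : 0 ≤ μ) (hα0 : 0 ≤ α) (hβ0 : 0 < β) (hγ0 : 0 < γ)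
    (Y : Matrix (Fin p) (Fin r) ℝ) (hY : Y.rank = r)
    (hgradH : frob ((2 : ℝ) • ((Y * Yᵀ - X) * Y)) > α * μ * (sval Ystar r) ^ 3 / (4 * κ))
    (hspec : sval Y 1 ≤ β * sval Ystar 1)
    (hfrobYY : frob (Y * Yᵀ) ≤ γ * frob X) :
    frob ((2 : ℝ) • (gradf (Y * Yᵀ) * Y)) ≥
      α * μ * (sval Ystar r) ^ 3 / (4 * κ) -
        (2 * δ * β * (1 + γ) * sval Ystar 1 * frob X + 2 * β * sval Ystar 1 * N) ∧
    (δ ≤ α * μ / (32 * κ ^ 2 * β * (1 + γ)) * ((sval Ystar r) ^ 2 / frob X) →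
      N ≤ α * μ / (32 * κ ^ 2 * β) * (sval Ystar r) ^ 2 →
      frob ((2 : ℝ) • (gradf (Y * Yᵀ) * Y)) > α * μ * (sval Ystar r) ^ 3 / (8 * κ)) := by
  subst hX hN
  have main := stmt15_general hgradf hhessf hδ0
    (fun X G hX hG => hRSCS X G hX (by lia)) hYs hκ hβ0 hγ0 hgradH hspec hfrobYY
  exact ⟨main.1.le, main.2⟩
end

section
/- Let f : ℝ^{p×p} → ℝ be twice continuously differentiable and satisfy the (r,2r)-restricted strict convexity property: ∇²f(X)[G,G] > 0 for every X ∈ ℝ^{p×p} with rank(X) ≤ r and every nonzero G ∈ ℝ^{p×p} with rank(G) ≤ 2r. Let Ŷ ∈ ℝ^{p×r}_* be such that ŶŶᵀ is a local minimizer of f over the set {X ∈ ℝ^{p×p} : X symmetric, X positive semidefinite, rank(X) ≤ 2r}. Then the lifted Riemannian Hessian of h([Y]) := f(YYᵀ) at [Ŷ] is positive definite: for every nonzero θ ∈ ℝ^{p×r} with Ŷᵀθ symmetric, ∇²f(ŶŶᵀ)[Ŷθᵀ + θŶᵀ, Ŷθᵀ + θŶᵀ] + 2⟨∇f(ŶŶᵀ),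 θθᵀ⟩ > 0. (Consequently there exists a neighborhood of [Ŷ] on which h is geodesically convex.) -/
open Matrix

/-!
Both terms of the lifted Hessian have a sign. Let `r` be the number of columns of `Y`. The ray
`YYᴴ + t • θθᴴ`, `t ≥ 0`, consists of positive semidefinite matrices of rank at most `2r`, so local
minimality of `YYᴴ` makes the derivative of `f` in the direction `θθᴴ` nonnegative. The direction
`G = Yθᴴ + θYᴴ` has rank at most `2r`, so the Hessian is positive on it once `G ≠ 0`; and since
`Yᴴθ` is Hermitian, `⟨Yθᴴ, G⟩ = ‖Yθᴴ‖² + ‖Yᴴθ‖²`, so `G = 0` would force `Yθᴴ = 0` and then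
`θ = 0`, as `Y` has full column rank.
-/

section LocalMin

open Filter Set Topology

variable {E : Type*} [AddCommGroup E] [Module ℝ E] {f : E → ℝ} {a b : E} {f' : ℝ}

theorem isMinFilter_hasLineDerivAt_nonneg {l : Filter E} (h : IsMinFilter f l a)
    (hd : HasLineDerivAt ℝ f f' a b) (hl : Tendsto (fun t : ℝ ↦ a + t • b) (𝓝[>] 0) l) :
    0 ≤ f' := by
  refine ge_of_tendsto hd.tendsto_slope_zero_right ?_
  filter_upwards [hl.eventually h, self_mem_nhdsWithin] with t hle ht
  simpa using mul_nonneg (inv_nonneg.2 (mem_Ioi.1 ht).le) (sub_nonneg.2 hle)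

theorem isLocalMinOn_hasLineDerivAt_nonneg [TopologicalSpace E] [ContinuousAdd E]
    [ContinuousSMul ℝ E] {s : Set E} (h : IsLocalMinOn f s a) (hd : HasLineDerivAt ℝ f f' a b)
    (hs : ∀ᶠ t : ℝ in 𝓝[>] 0, a + t • b ∈ s) : 0 ≤ f' := by
  have hcont : Continuous fun t : ℝ ↦ a + t • b := by fun_prop
  refine isMinFilter_hasLineDerivAt_nonneg h hd (tendsto_nhdsWithin_iff.2 ⟨?_, hs⟩)
  simpa using (hcont.tendsto 0).mono_left nhdsWithin_le_nhds

end LocalMin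

section Frobenius

open Filter Topology

variable {m n : ℕ}

@[fun_prop]
theorem continuous_frob : Continuous (frob : Matrix (Fin m) (Fin n) ℝ → ℝ) := by
  unfold frob
  fun_prop

@[simp]
theorem frob_zero : frob (0 : Matrix (Fin m) (Fin n) ℝ) = 0 := by
  simp [frob]

theorem isLocalMinOn_of_frob_sub_lt {f : Matrix (Fin m) (Fin n) ℝ → ℝ}
    {s : Set (Matrix (Fin m) (Fin n) ℝ)} {A : Matrix (Fin m) (Fin n) ℝ} {ε : ℝ} (hε : 0 < ε)
    (h : ∀ X ∈ s, frob (X - A) < ε → f A ≤ f X) : IsLocalMinOn f s A := by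
  have hcont : Continuous fun X : Matrix (Fin m) (Fin n) ℝ ↦ frob (X - A) := by fun_prop
  have hball : ∀ᶠ X in 𝓝 A, frob (X - A) < ε :=
    hcont.continuousAt.eventually_lt continuousAt_const (by simpa using hε)
  filter_upwards [mem_nhdsWithin_of_mem_nhds hball, self_mem_nhdsWithin] with X hX hXs
  exact h X hXs hX

end Frobenius

section Rank

variable {m n o k R : Type*} [Fintype n]

theorem rank_mul_add_mul_le [Fintype o] [Fintype k] [CommRing R] [StrongRankCondition R]
    (A : Matrix m n R) (B : Matrix n k R) (C : Matrix m o R) (D : Matrix o k R) :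
    (A * B + C * D).rank ≤ Fintype.card n + Fintype.card o := by
  rw [← fromCols_mul_fromRows, ← Fintype.card_sum]
  exact (rank_mul_le_left _ _).trans (rank_le_card_width _)

theorem mulVec_injective_of_rank_eq_card [Field R] {A : Matrix m n R}
    (hA : A.rank = Fintype.card n) : Function.Injective A.mulVec := by
  have hrange : Module.finrank R A.mulVecLin.range = Module.finrank R (n → R) := by
    rw [Module.finrank_fintype_fun_eq_card, ← hA, rank]
  have hker : Module.finrank R A.mulVecLin.ker = 0 := by
    have := A.mulVecLin.finrank_range_add_finrank_ker
    lia
  exact LinearMap.ker_eq_bot.1 (Submodule.finrank_eq_zero.1 hker)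

theorem eq_zero_of_mul_eq_zero_of_rank_eq_card [Field R] {A : Matrix m n R}
    {B : Matrix n k R} (hA : A.rank = Fintype.card n) (h : A * B = 0) : B = 0 := by
  have h0 : A * B = A * (0 : Matrix n k R) := by rw [h, Matrix.mul_zero]
  exact ext_col fun j ↦ mulVec_injective_of_rank_eq_card hA (congrArg (·.col j) h0)

end Rank

section Horizontal

variable {m n R : Type*} [Fintype m] [Fintype n]

theorem trace_conjTranspose_mul_add_of_isHermitian [CommRing R] [StarRing R] {Y θ : Matrix m n R}
    (hθ : (Yᴴ * θ).IsHermitian) :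
    ((Y * θᴴ)ᴴ * (Y * θᴴ + θ * Yᴴ)).trace =
      ((Y * θᴴ)ᴴ * (Y * θᴴ)).trace + ((Yᴴ * θ)ᴴ * (Yᴴ * θ)).trace := by
  have hcyc : ((Y * θᴴ)ᴴ * (θ * Yᴴ)).trace = ((Yᴴ * θ)ᴴ * (Yᴴ * θ)).trace := by
    rw [hθ.eq, conjTranspose_mul, conjTranspose_conjTranspose, Matrix.mul_assoc,
      trace_mul_comm]
    simp only [Matrix.mul_assoc]
  rw [Matrix.mul_add, trace_add, hcyc]

theorem eq_zero_of_mul_conjTranspose_add_eq_zero [Field R] [PartialOrder R] [StarRing R]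
    [StarOrderedRing R] {Y θ : Matrix m n R} (hY : Y.rank = Fintype.card n)
    (hθ : (Yᴴ * θ).IsHermitian) (h : Y * θᴴ + θ * Yᴴ = 0) : θ = 0 := by
  have htrace := trace_conjTranspose_mul_add_of_isHermitian hθ
  rw [h, Matrix.mul_zero, trace_zero, eq_comm, add_eq_zero_iff_of_nonneg
    (posSemidef_conjTranspose_mul_self _).trace_nonneg
    (posSemidef_conjTranspose_mul_self _).trace_nonneg,
    trace_conjTranspose_mul_self_eq_zero_iff] at htrace
  exact conjTranspose_eq_zero.1 (eq_zero_of_mul_eq_zero_of_rank_eq_card hY htrace.1)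

end Horizontal

section LiftedHessian

open Set
open scoped ComplexOrder

variable {m n 𝕜 : Type*} [Fintype m] [Fintype n] [RCLike 𝕜]

/-- The positive semidefinite matrices of rank at most `k`, the constraint set of low-rank
semidefinite optimization. -/
def psdRankLE (m 𝕜 : Type*) [Fintype m] [RCLike 𝕜] (k : ℕ) : Set (Matrix m m 𝕜) :=
  {X | X.PosSemidef ∧ X.rank ≤ k}

theorem mul_conjTranspose_add_smul_mem_psdRankLE (Y θ : Matrix m n 𝕜) {t : ℝ} (ht : 0 ≤ t) :
    Y * Yᴴ + t • (θ * θᴴ) ∈ psdRankLE m 𝕜 (2 * Fintype.card n) := by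
  refine ⟨?_, ?_⟩
  · exact (posSemidef_self_mul_conjTranspose Y).add
      ((posSemidef_self_mul_conjTranspose θ).smul ht)
  · rw [← Matrix.smul_mul, two_mul]
    exact rank_mul_add_mul_le Y Yᴴ (t • θ) θᴴ

theorem stmt17_general {f : Matrix m m 𝕜 → ℝ} {f' : Matrix m m 𝕜 → Matrix m m 𝕜 → ℝ}
    {f'' : Matrix m m 𝕜 → ℝ} {Y θ : Matrix m n 𝕜}
    (hf' : ∀ X D, HasLineDerivAt ℝ f (f' X D) X D)
    (_hf'' : ∀ G, HasLineDerivAt ℝ (fun X ↦ f' X G) (f'' G) (Y * Yᴴ) G)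
    (hpos : ∀ G : Matrix m m 𝕜, G.IsHermitian → G.rank ≤ 2 * Fintype.card n → G ≠ 0 → 0 < f'' G)
    (hY : Y.rank = Fintype.card n)
    (hmin : IsLocalMinOn f (psdRankLE m 𝕜 (2 * Fintype.card n)) (Y * Yᴴ))
    (hθ : θ ≠ 0) (hYθ : (Yᴴ * θ).IsHermitian) :
    0 < f'' (Y * θᴴ + θ * Yᴴ) + 2 * f' (Y * Yᴴ) (θ * θᴴ) := by
  have hgrad : 0 ≤ f' (Y * Yᴴ) (θ * θᴴ) :=
    isLocalMinOn_hasLineDerivAt_nonneg hmin (hf' _ _) <| by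
      filter_upwards [self_mem_nhdsWithin] with t ht
      exact mul_conjTranspose_add_smul_mem_psdRankLE Y θ (mem_Ioi.1 ht).le
  have hhess : 0 < f'' (Y * θᴴ + θ * Yᴴ) := by
    refine hpos _ ?_ ?_ fun h ↦ hθ (eq_zero_of_mul_conjTranspose_add_eq_zero hY hYθ h)
    · simp [IsHermitian, add_comm]
    · rw [two_mul]
      exact rank_mul_add_mul_le Y θᴴ θ Yᴴ
  positivity

end LiftedHessian

/-- under (r,2r)-restricted strict convexity of `f`, at a full-rank local
minimizer of `f` over PSD matrices of rank at most `2r`, the lifted Riemannian Hessian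
quadratic form of `h([Y]) = f(YYᵀ)` is positive definite on horizontal directions. -/
theorem stmt17 {p r : ℕ}
    (f : Matrix (Fin p) (Fin p) ℝ → ℝ)
    (gradf : Matrix (Fin p) (Fin p) ℝ → Matrix (Fin p) (Fin p) ℝ)
    (hessf : Matrix (Fin p) (Fin p) ℝ → Matrix (Fin p) (Fin p) ℝ → ℝ)
    (hgradf : ∀ X D : Matrix (Fin p) (Fin p) ℝ,
      HasDerivAt (fun t : ℝ => f (X + t • D)) (trInner (gradf X) D) 0)
    (hhessf : ∀ X G : Matrix (Fin p) (Fin p) ℝ,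
      HasDerivAt (fun t : ℝ => trInner (gradf (X + t • G)) G) (hessf X G) 0)
    (hstrict : ∀ X G : Matrix (Fin p) (Fin p) ℝ, X.rank ≤ r → G.rank ≤ 2 * r → G ≠ 0 →
      0 < hessf X G)
    (Yhat : Matrix (Fin p) (Fin r) ℝ) (hYhat : Yhat.rank = r)
    (hlocmin : ∃ ε > (0 : ℝ), ∀ X : Matrix (Fin p) (Fin p) ℝ, X.PosSemidef →
      X.rank ≤ 2 * r → frob (X - Yhat * Yhatᵀ) < ε → f (Yhat * Yhatᵀ) ≤ f X) :
    ∀ θ : Matrix (Fin p) (Fin r) ℝ, θ ≠ 0 → (Yhatᵀ * θ).IsSymm →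
      0 < hessf (Yhat * Yhatᵀ) (Yhat * θᵀ + θ * Yhatᵀ) +
        2 * trInner (gradf (Yhat * Yhatᵀ)) (θ * θᵀ) := by
  obtain ⟨ε, hε, hmin⟩ := hlocmin
  intro θ hθ hsym
  have hmin' : IsLocalMinOn f (psdRankLE (Fin p) ℝ (2 * r)) (Yhat * Yhatᵀ) :=
    isLocalMinOn_of_frob_sub_lt hε fun X hX ↦ hmin X hX.1 hX.2
  have hrank : (Yhat * Yhatᵀ).rank ≤ r := (rank_self_mul_transpose Yhat).trans hYhat |>.le
  simpa using stmt17_general hgradf (hhessf _)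
    (fun G _ hG ↦ hstrict _ G hrank (by simpa using hG)) (by simpa using hYhat)
    (by simpa using hmin') hθ hsym
end
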